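/- The scan test satisfies the non-asymptotic bounds α(ψ^max_T) ≤ G_{nm}·Φ(−T_{nm}) and β_{nm,a}(ψ^max_T) ≤ Φ(T_{nm} − a√(nm)); moreover, in the asymptotic regime where N → ∞, M → ∞, n → ∞, m → ∞, p = n/N → 0 and q = m/M → 0, one has α(ψ^max_T) → 0. -/

import Mathlib

open MeasureTheory ProbabilityTheory Filter Topology
open scoped Classical

noncomputable section

/-- Standard normal cumulative distribution function `Φ`. -/
def Phi (x : ℝ) : ℝ := ((gaussianReal 0 1) (Set.Iic x)).toReal

/-- Law `P_S` of the `N × M` observation matrix `Y_{ij} = s_{ij} + ξ_{ij}`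
with i.i.d. standard Gaussian noise. -/
def matLaw (N M : ℕ) (S : Fin N → Fin M → ℝ) : Measure ((Fin N × Fin M) → ℝ) :=
  Measure.pi fun ij => gaussianReal (S ij.1 ij.2) 1

/-- First-type error `α(ψ) = E_0 ψ`. -/
def alphaErr (N M : ℕ) (ψ : ((Fin N × Fin M) → ℝ) → ℝ) : ℝ :=
  ∫ y, ψ y ∂(matLaw N M fun _ _ => 0)

/-- Second-type error `β(ψ, S) = E_S (1 - ψ)`. -/
def betaErr (N M : ℕ) (S : Fin N → Fin M → ℝ) (ψ : ((Fin N × Fin M) → ℝ) → ℝ) : ℝ :=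
  ∫ y, (1 - ψ y) ∂(matLaw N M S)

/-- The alternative class `S_{nm,a}`: some `n × m` submatrix `C = A × B` has all entries `≥ a`,
and all other entries vanish. -/
def SAlt (N M n m : ℕ) (a : ℝ) : Set (Fin N → Fin M → ℝ) :=
  {S | ∃ (A : Finset (Fin N)) (B : Finset (Fin M)), A.card = n ∧ B.card = m ∧
      (∀ i j, i ∈ A → j ∈ B → a ≤ S i j) ∧ ∀ i j, ¬(i ∈ A ∧ j ∈ B) → S i j = 0}

/-- Maximal second-type error `β_{nm,a}(ψ)`. -/
def betaMax (N M n m : ℕ) (a : ℝ) (ψ : ((Fin N × Fin M) → ℝ) → ℝ) : ℝ :=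
  sSup ((fun S => betaErr N M S ψ) '' SAlt N M n m a)

/-- Linear statistic `t_lin`. -/
def tlin (N M : ℕ) (y : (Fin N × Fin M) → ℝ) : ℝ :=
  (∑ ij : Fin N × Fin M, y ij) / Real.sqrt ((N : ℝ) * M)

/-- Linear test `ψ^lin_H = 1{t_lin > H}`. -/
def psiLin (N M : ℕ) (H : ℝ) (y : (Fin N × Fin M) → ℝ) : ℝ :=
  if H < tlin N M y then 1 else 0

/-- Normalized submatrix sum `Y_C` for `C = A × B`. -/
def YC (N M : ℕ) (y : (Fin N × Fin M) → ℝ)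
    (A : Finset (Fin N)) (B : Finset (Fin M)) : ℝ :=
  (∑ i ∈ A, ∑ j ∈ B, y (i, j)) / Real.sqrt ((A.card : ℝ) * B.card)

/-- Scan statistic `t_max = max_{C ∈ C_{nm}} Y_C`. -/
def tmax (N M n m : ℕ) (y : (Fin N × Fin M) → ℝ) : ℝ :=
  sSup {v | ∃ (A : Finset (Fin N)) (B : Finset (Fin M)),
    A.card = n ∧ B.card = m ∧ v = YC N M y A B}

/-- `G_{nm} = C(N,n) · C(M,m)`, the number of `n × m` submatrices. -/
def Gnm (N M n m : ℕ) : ℕ := N.choose n * M.choose m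

/-- Threshold `T_{nm} = √(2 log G_{nm})`. -/
def Tnm (N M n m : ℕ) : ℝ := Real.sqrt (2 * Real.log (Gnm N M n m : ℝ))

/-- Scan test `ψ^max_T = 1{t_max > T}`. -/
def psiMax (N M n m : ℕ) (T : ℝ) (y : (Fin N × Fin M) → ℝ) : ℝ :=
  if T < tmax N M n m y then 1 else 0

/-!
Under `P_S` each `Y_C` is Gaussian with unit variance, and its mean is the same normalized submatrix
sum computed from the signal `S`. So under `P_0` each of the `G` events `Y_C > T` has probability
`Φ(-T)`, and a union bound controls `α`. Under an alternative supported on `C` the scan test accepts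
only if `Y_C ≤ T`, where `Y_C` has mean at least `a √(nm)`, which controls `β`. Finally the Mills
ratio bound `Φ(-T) ≤ φ(T) / T` gives `G Φ(-T) ≤ 1 / (√(2π) T)` at `T = √(2 log G)`, and `G → ∞`
since `G ≥ C(N, n) ≥ N / n = 1 / p`.
-/

/-! ### The standard normal distribution function -/

lemma Phi_nonneg (x : ℝ) : 0 ≤ Phi x := ENNReal.toReal_nonneg

lemma Phi_mono : Monotone Phi := fun _ _ h =>
  measureReal_mono (μ := gaussianReal 0 1) (Set.Iic_subset_Iic.2 h)

lemma gaussianReal_real_Iic (μ x : ℝ) : (gaussianReal μ 1).real (Set.Iic x) = Phi (x - μ) := by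
  have h : HasLaw (fun z => z + μ) (gaussianReal μ 1) (gaussianReal 0 1) := by
    simpa using gaussianReal_add_const HasLaw.id (P := gaussianReal 0 1) μ
  change (gaussianReal μ 1).real {z | z ≤ x} = (gaussianReal 0 1).real {z | z ≤ x - μ}
  simp only [← h.measureReal_eq measurableSet_Iic, le_sub_iff_add_le]

lemma gaussianReal_real_Ioi (μ x : ℝ) : (gaussianReal μ 1).real (Set.Ioi x) = Phi (μ - x) := by
  have := nullSingletonClass_gaussianReal (μ := -μ) one_ne_zero
  have h : HasLaw (fun z => -z) (gaussianReal (-μ) 1) (gaussianReal μ 1) :=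
    gaussianReal_neg HasLaw.id
  calc (gaussianReal μ 1).real (Set.Ioi x)
      = (gaussianReal μ 1).real {z | -z < -x} := by simp only [neg_lt_neg_iff]; rfl
    _ = (gaussianReal (-μ) 1).real (Set.Iio (-x)) := h.measureReal_eq measurableSet_Iio
    _ = (gaussianReal (-μ) 1).real (Set.Iic (-x)) := measureReal_congr Iio_ae_eq_Iic
    _ = Phi (μ - x) := by rw [gaussianReal_real_Iic]; ring_nf

lemma Phi_neg_le_gaussianPDFReal_div {T : ℝ} (hT : 0 < T) :
    Phi (-T) ≤ gaussianPDFReal 0 1 T / T := by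
  -- The tangent line of `-x² / 2` at `-T` dominates the Gaussian exponent.
  have hpdf (x : ℝ) : gaussianPDFReal 0 1 x ≤
      (√(2 * Real.pi))⁻¹ * Real.exp (T ^ 2 / 2) * Real.exp (T * x) := by
    simp only [gaussianPDFReal, NNReal.coe_one, mul_one, sub_zero]
    rw [mul_assoc, ← Real.exp_add]
    gcongr
    linarith [sq_nonneg (x + T)]
  calc Phi (-T) = ∫ x in Set.Iic (-T), gaussianPDFReal 0 1 x := by
        rw [Phi, gaussianReal_apply_eq_integral 0 one_ne_zero,
          ENNReal.toReal_ofReal (integral_nonneg fun x => gaussianPDFReal_nonneg _ _ _)]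
    _ ≤ ∫ x in Set.Iic (-T),
          (√(2 * Real.pi))⁻¹ * Real.exp (T ^ 2 / 2) * Real.exp (T * x) :=
        integral_mono (integrable_gaussianPDFReal 0 1).integrableOn
          ((integrableOn_exp_mul_Iic hT (-T)).const_mul _) hpdf
    _ = (√(2 * Real.pi))⁻¹ * (Real.exp (T ^ 2 / 2) * Real.exp (T * -T)) / T := by
        rw [integral_const_mul, integral_exp_mul_Iic hT]
        ring
    _ = gaussianPDFReal 0 1 T / T := by
        simp only [gaussianPDFReal, NNReal.coe_one, mul_one, sub_zero, ← Real.exp_add]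
        ring_nf

lemma gaussianPDFReal_sqrt_two_mul_log {x : ℝ} (hx : 1 ≤ x) :
    gaussianPDFReal 0 1 √(2 * Real.log x) = (√(2 * Real.pi))⁻¹ / x := by
  have hlog : 0 ≤ 2 * Real.log x := mul_nonneg zero_le_two (Real.log_nonneg hx)
  have hexp : Real.exp (-(2 * Real.log x) / 2) = x⁻¹ := by
    rw [show -(2 * Real.log x) / 2 = -Real.log x by ring, Real.exp_neg, Real.exp_log (by linarith)]
  simp only [gaussianPDFReal, NNReal.coe_one, mul_one, sub_zero, Real.sq_sqrt hlog, hexp]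
  rfl

lemma tendsto_mul_Phi_neg_sqrt_two_mul_log :
    Tendsto (fun x => x * Phi (-√(2 * Real.log x))) atTop (𝓝 0) := by
  have hsqrt : Tendsto (fun x => √(2 * Real.log x)) atTop atTop :=
    Real.tendsto_sqrt_atTop.comp (Real.tendsto_log_atTop.const_mul_atTop two_pos)
  refine squeeze_zero' ?_ ?_ (hsqrt.const_div_atTop (√(2 * Real.pi))⁻¹)
  · filter_upwards [eventually_ge_atTop 0] with x hx using mul_nonneg hx (Phi_nonneg _)
  · filter_upwards [eventually_gt_atTop 1] with x hx
    have hT : 0 < √(2 * Real.log x) := Real.sqrt_pos.2 (mul_pos two_pos (Real.log_pos hx))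
    have hx0 : x ≠ 0 := by positivity
    calc x * Phi (-√(2 * Real.log x))
        ≤ x * ((√(2 * Real.pi))⁻¹ / x / √(2 * Real.log x)) := by
          rw [← gaussianPDFReal_sqrt_two_mul_log hx.le]
          gcongr
          exact Phi_neg_le_gaussianPDFReal_div hT
      _ = (√(2 * Real.pi))⁻¹ / √(2 * Real.log x) := by rw [← mul_div_assoc, mul_div_cancel₀ _ hx0]

/-! ### Gaussian laws of submatrix sums -/

lemma hasLaw_finsetSum_gaussianReal {Ω ι : Type*} [MeasurableSpace Ω] {P : Measure Ω}
    {X : ι → Ω → ℝ} {μ : ι → ℝ} {v : ι → NNReal}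
    (hX : ∀ i, HasLaw (X i) (gaussianReal (μ i) (v i)) P) (hind : iIndepFun X P) (s : Finset ι) :
    HasLaw (∑ i ∈ s, X i) (gaussianReal (∑ i ∈ s, μ i) (∑ i ∈ s, v i)) P := by
  have := hind.isProbabilityMeasure
  have hmeas (i : ι) : AEMeasurable (X i) P := (hX i).aemeasurable
  refine ⟨by fun_prop, ?_⟩
  induction s using Finset.induction_on with
  | empty => simp [Pi.zero_def, gaussianReal_zero_var, Measure.map_const]
  | insert i s hi ih =>
    simp only [Finset.sum_insert hi]
    exact gaussianReal_add_gaussianReal_of_indepFun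
      (hind.indepFun_finsetSum_of_notMem₀ hmeas hi).symm (hX i).map_eq ih

instance isProbabilityMeasure_matLaw (N M : ℕ) (S : Fin N → Fin M → ℝ) :
    IsProbabilityMeasure (matLaw N M S) := by
  unfold matLaw
  infer_instance

lemma iIndepFun_eval_matLaw (N M : ℕ) (S : Fin N → Fin M → ℝ) :
    iIndepFun (fun (ij : Fin N × Fin M) (y : Fin N × Fin M → ℝ) => y ij) (matLaw N M S) :=
  iIndepFun_pi (X := fun _ x => x) fun _ => aemeasurable_id

lemma hasLaw_eval_matLaw (N M : ℕ) (S : Fin N → Fin M → ℝ) (ij : Fin N × Fin M) :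
    HasLaw (fun y : Fin N × Fin M → ℝ => y ij) (gaussianReal (S ij.1 ij.2) 1) (matLaw N M S) :=
  (measurePreserving_eval (fun ij : Fin N × Fin M => gaussianReal (S ij.1 ij.2) 1) ij).hasLaw

section SubmatrixSum

variable {N M : ℕ} {A : Finset (Fin N)} {B : Finset (Fin M)}

lemma hasLaw_YC (S : Fin N → Fin M → ℝ) (hA : A.Nonempty) (hB : B.Nonempty) :
    HasLaw (fun y => YC N M y A B) (gaussianReal (YC N M (Function.uncurry S) A B) 1)
      (matLaw N M S) := by
  have hcard : (A.card : ℝ) * B.card ≠ 0 := by simp [hA.ne_empty, hB.ne_empty]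
  convert gaussianReal_div_const (hasLaw_finsetSum_gaussianReal (hasLaw_eval_matLaw N M S)
    (iIndepFun_eval_matLaw N M S) (A ×ˢ B)) √((A.card : ℝ) * B.card) using 2
  · simp [YC, Finset.sum_product]
  · simp [YC, Finset.sum_product, Function.uncurry]
  · ext
    have hsq : √((A.card : ℝ) * B.card) ^ 2 = A.card * B.card := Real.sq_sqrt (by positivity)
    simp only [NNReal.coe_one, NNReal.coe_div, NNReal.coe_mk, NNReal.coe_mul,
      NNReal.coe_natCast, Finset.sum_const, Finset.card_product, nsmul_eq_mul, Nat.cast_mul,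
      mul_one, hsq, div_self hcard]

lemma matLaw_real_YC_le (S : Fin N → Fin M → ℝ) (hA : A.Nonempty) (hB : B.Nonempty) (T : ℝ) :
    (matLaw N M S).real {y | YC N M y A B ≤ T} = Phi (T - YC N M (Function.uncurry S) A B) := by
  rw [← gaussianReal_real_Iic]
  exact (hasLaw_YC S hA hB).measureReal_eq measurableSet_Iic

lemma matLaw_real_lt_YC (S : Fin N → Fin M → ℝ) (hA : A.Nonempty) (hB : B.Nonempty) (T : ℝ) :
    (matLaw N M S).real {y | T < YC N M y A B} = Phi (YC N M (Function.uncurry S) A B - T) := by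
  rw [← gaussianReal_real_Ioi]
  exact (hasLaw_YC S hA hB).measureReal_eq measurableSet_Ioi

lemma mul_sqrt_card_le_YC {y : Fin N × Fin M → ℝ} {a : ℝ}
    (hy : ∀ i j, i ∈ A → j ∈ B → a ≤ y (i, j)) : a * √((A.card : ℝ) * B.card) ≤ YC N M y A B := by
  calc a * √((A.card : ℝ) * B.card)
      = (∑ _i ∈ A, ∑ _j ∈ B, a) / √((A.card : ℝ) * B.card) := by
        simp only [Finset.sum_const, nsmul_eq_mul, ← mul_assoc]
        rw [mul_comm _ a, mul_div_assoc, Real.div_sqrt]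
    _ ≤ YC N M y A B := by
        unfold YC
        gcongr with i hi j hj
        exact hy i j hi hj

end SubmatrixSum

/-! ### The scan test -/

/-- The collection `C_{nm}` of candidate submatrices `C = A × B`, each encoded as the pair
`(A, B)`. -/
def submatrices (N M n m : ℕ) : Finset (Finset (Fin N) × Finset (Fin M)) :=
  Finset.univ.powersetCard n ×ˢ Finset.univ.powersetCard m

section ScanTest

variable {N M n m : ℕ}

lemma mem_submatrices {C : Finset (Fin N) × Finset (Fin M)} :
    C ∈ submatrices N M n m ↔ C.1.card = n ∧ C.2.card = m := by
  simp [submatrices]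

lemma card_submatrices : (submatrices N M n m).card = Gnm N M n m := by
  simp [submatrices, Gnm]

lemma submatrices_nonempty (hnN : n ≤ N) (hmM : m ≤ M) : (submatrices N M n m).Nonempty := by
  simp [submatrices, Finset.powersetCard_nonempty, hnN, hmM]

lemma tmax_eq_iSup (y : Fin N × Fin M → ℝ) :
    tmax N M n m y = ⨆ C : submatrices N M n m, YC N M y C.1.1 C.1.2 := by
  unfold tmax iSup
  congr 1
  ext v
  simp [mem_submatrices, eq_comm, and_assoc]

lemma measurable_tmax : Measurable (tmax N M n m) := by
  simp only [funext tmax_eq_iSup, YC]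
  fun_prop

lemma YC_le_tmax (y : Fin N × Fin M → ℝ) {A : Finset (Fin N)} {B : Finset (Fin M)}
    (hA : A.card = n) (hB : B.card = m) : YC N M y A B ≤ tmax N M n m y := by
  rw [tmax_eq_iSup]
  exact le_ciSup (f := fun C : submatrices N M n m => YC N M y C.1.1 C.1.2)
    (Set.finite_range _).bddAbove ⟨(A, B), mem_submatrices.2 ⟨hA, hB⟩⟩

lemma exists_lt_YC_of_lt_tmax (hnN : n ≤ N) (hmM : m ≤ M) {T : ℝ} {y : Fin N × Fin M → ℝ}
    (h : T < tmax N M n m y) : ∃ C ∈ submatrices N M n m, T < YC N M y C.1 C.2 := by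
  have := (submatrices_nonempty hnN hmM).to_subtype
  rw [tmax_eq_iSup] at h
  obtain ⟨C, hC⟩ := exists_lt_of_lt_ciSup h
  exact ⟨C, C.2, hC⟩

lemma alphaErr_psiMax (T : ℝ) :
    alphaErr N M (psiMax N M n m T) = (matLaw N M fun _ _ => 0).real {y | T < tmax N M n m y} := by
  rw [← integral_indicator_one (measurableSet_lt measurable_const measurable_tmax)]
  rfl

lemma betaErr_psiMax (S : Fin N → Fin M → ℝ) (T : ℝ) :
    betaErr N M S (psiMax N M n m T) = (matLaw N M S).real {y | tmax N M n m y ≤ T} := by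
  rw [← integral_indicator_one (measurableSet_le measurable_tmax measurable_const)]
  refine integral_congr_ae (ae_of_all _ fun y => ?_)
  by_cases h : T < tmax N M n m y <;> simp [psiMax, Set.indicator, h, not_le.2, not_lt.1]

lemma alphaErr_psiMax_le (hn : 0 < n) (hnN : n ≤ N) (hm : 0 < m) (hmM : m ≤ M) (T : ℝ) :
    alphaErr N M (psiMax N M n m T) ≤ Gnm N M n m * Phi (-T) := by
  have hprob : ∀ C ∈ submatrices N M n m,
      (matLaw N M fun _ _ => 0).real {y | T < YC N M y C.1 C.2} = Phi (-T) := by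
    intro C hC
    obtain ⟨hA, hB⟩ := mem_submatrices.1 hC
    rw [matLaw_real_lt_YC _ (Finset.card_pos.1 (hA ▸ hn)) (Finset.card_pos.1 (hB ▸ hm))]
    simp [YC, Function.uncurry]
  calc alphaErr N M (psiMax N M n m T)
      = (matLaw N M fun _ _ => 0).real {y | T < tmax N M n m y} := alphaErr_psiMax T
    _ ≤ (matLaw N M fun _ _ => 0).real
          (⋃ C ∈ submatrices N M n m, {y | T < YC N M y C.1 C.2}) :=
        measureReal_mono (h₂ := measure_ne_top _ _) fun y hy =>
          let ⟨_, hC, hlt⟩ := exists_lt_YC_of_lt_tmax hnN hmM hy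
          Set.mem_biUnion hC hlt
    _ ≤ ∑ C ∈ submatrices N M n m, (matLaw N M fun _ _ => 0).real {y | T < YC N M y C.1 C.2} :=
        measureReal_biUnion_finset_le _ _
    _ = Gnm N M n m * Phi (-T) := by
        rw [Finset.sum_congr rfl hprob, Finset.sum_const, card_submatrices, nsmul_eq_mul]

lemma betaMax_psiMax_le (hn : 0 < n) (hm : 0 < m) (a T : ℝ) :
    betaMax N M n m a (psiMax N M n m T) ≤ Phi (T - a * √((n : ℝ) * m)) := by
  refine Real.sSup_le ?_ (Phi_nonneg _)
  rintro _ ⟨S, ⟨A, B, rfl, rfl, hS, -⟩, rfl⟩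
  calc betaErr N M S (psiMax N M A.card B.card T)
      = (matLaw N M S).real {y | tmax N M A.card B.card y ≤ T} := betaErr_psiMax S T
    _ ≤ (matLaw N M S).real {y | YC N M y A B ≤ T} :=
        measureReal_mono fun y hy => (YC_le_tmax y rfl rfl).trans hy
    _ = Phi (T - YC N M (Function.uncurry S) A B) :=
        matLaw_real_YC_le S (Finset.card_pos.1 hn) (Finset.card_pos.1 hm) T
    _ ≤ Phi (T - a * √((A.card : ℝ) * B.card)) :=
        Phi_mono (sub_le_sub_left (mul_sqrt_card_le_YC hS) T)

end ScanTest

/-! ### Growth of the number of submatrices -/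

lemma le_mul_choose {N n : ℕ} (hn : 0 < n) (hnN : n ≤ N) : N ≤ n * N.choose n := by
  obtain ⟨k, rfl⟩ := Nat.exists_eq_add_one.2 hn
  obtain ⟨L, rfl⟩ := Nat.exists_eq_add_one.2 (hn.trans_le hnN)
  calc L + 1 ≤ (L + 1) * L.choose k :=
        Nat.le_mul_of_pos_right _ (Nat.choose_pos (Nat.le_of_succ_le_succ hnN))
    _ = (k + 1) * (L + 1).choose (k + 1) := by rw [Nat.add_one_mul_choose_eq, mul_comm]

lemma tendsto_choose_atTop {ι : Type*} {l : Filter ι} {N n : ι → ℕ} (hn : ∀ t, 0 < n t)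
    (hnN : ∀ t, n t ≤ N t) (hp : Tendsto (fun t => (n t : ℝ) / N t) l (𝓝 0)) :
    Tendsto (fun t => (N t).choose (n t)) l atTop := by
  have hn' (t : ι) : (0 : ℝ) < n t := by exact_mod_cast hn t
  have hN' (t : ι) : (0 : ℝ) < N t := by exact_mod_cast (hn t).trans_le (hnN t)
  have hinv : Tendsto (fun t => ((n t : ℝ) / N t)⁻¹) l atTop :=
    (tendsto_nhdsWithin_iff.2
      ⟨hp, Eventually.of_forall fun t => div_pos (hn' t) (hN' t)⟩).inv_tendsto_nhdsGT_zero
  refine tendsto_natCast_atTop_iff.1 (tendsto_atTop_mono (fun t => ?_) hinv)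
  rw [inv_div, div_le_iff₀' (hn' t)]
  exact_mod_cast le_mul_choose (hn t) (hnN t)

lemma tendsto_Gnm_atTop {ι : Type*} {l : Filter ι} {N M n m : ι → ℕ} (hn : ∀ t, 0 < n t)
    (hnN : ∀ t, n t ≤ N t) (hmM : ∀ t, m t ≤ M t)
    (hp : Tendsto (fun t => (n t : ℝ) / N t) l (𝓝 0)) :
    Tendsto (fun t => Gnm (N t) (M t) (n t) (m t)) l atTop :=
  tendsto_atTop_mono (fun t => Nat.le_mul_of_pos_right _ (Nat.choose_pos (hmM t)))
    (tendsto_choose_atTop hn hnN hp)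

theorem stmt1_general {ι : Type*} {l : Filter ι} (N M n m : ι → ℕ) (a : ι → ℝ)
    (hb : ∀ t, 1 ≤ n t ∧ n t ≤ N t ∧ 1 ≤ m t ∧ m t ≤ M t)
    (hG : Tendsto (fun t => Gnm (N t) (M t) (n t) (m t)) l atTop) :
    (∀ t,
      alphaErr (N t) (M t)
          (psiMax (N t) (M t) (n t) (m t) (Tnm (N t) (M t) (n t) (m t))) ≤
        (Gnm (N t) (M t) (n t) (m t) : ℝ) * Phi (-(Tnm (N t) (M t) (n t) (m t))) ∧
      betaMax (N t) (M t) (n t) (m t) (a t)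
          (psiMax (N t) (M t) (n t) (m t) (Tnm (N t) (M t) (n t) (m t))) ≤
        Phi (Tnm (N t) (M t) (n t) (m t) - a t * Real.sqrt ((n t : ℝ) * m t))) ∧
    Tendsto (fun t =>
      alphaErr (N t) (M t)
        (psiMax (N t) (M t) (n t) (m t) (Tnm (N t) (M t) (n t) (m t))))
      l (𝓝 0) := by
  have hα (t : ι) := alphaErr_psiMax_le (hb t).1 (hb t).2.1 (hb t).2.2.1 (hb t).2.2.2
    (Tnm (N t) (M t) (n t) (m t))
  refine ⟨fun t => ⟨hα t, betaMax_psiMax_le (hb t).1 (hb t).2.2.1 _ _⟩, ?_⟩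
  refine squeeze_zero (fun t => ?_) hα
    (tendsto_mul_Phi_neg_sqrt_two_mul_log.comp (tendsto_natCast_atTop_atTop.comp hG))
  rw [alphaErr_psiMax]
  exact measureReal_nonneg

/-- Proposition 2: non-asymptotic bounds `α(ψ^max_T) ≤ G_{nm} Φ(-T_{nm})`,
`β_{nm,a}(ψ^max_T) ≤ Φ(T_{nm} - a√(nm))`; and in the asymptotic regime
`N, M, n, m → ∞`, `p = n/N → 0`, `q = m/M → 0`, one has `α(ψ^max_T) → 0`. -/
theorem stmt1 (N M n m : ℕ → ℕ) (a : ℕ → ℝ)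
    (hb : ∀ t, 1 ≤ n t ∧ n t ≤ N t ∧ 1 ≤ m t ∧ m t ≤ M t)
    (ha : ∀ t, 0 < a t)
    (hN : Tendsto N atTop atTop) (hM : Tendsto M atTop atTop)
    (hn : Tendsto n atTop atTop) (hm : Tendsto m atTop atTop)
    (hp : Tendsto (fun t => (n t : ℝ) / N t) atTop (nhds 0))
    (hq : Tendsto (fun t => (m t : ℝ) / M t) atTop (nhds 0)) :
    (∀ t,
      alphaErr (N t) (M t)
          (psiMax (N t) (M t) (n t) (m t) (Tnm (N t) (M t) (n t) (m t))) ≤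
        (Gnm (N t) (M t) (n t) (m t) : ℝ) * Phi (-(Tnm (N t) (M t) (n t) (m t))) ∧
      betaMax (N t) (M t) (n t) (m t) (a t)
          (psiMax (N t) (M t) (n t) (m t) (Tnm (N t) (M t) (n t) (m t))) ≤
        Phi (Tnm (N t) (M t) (n t) (m t) - a t * Real.sqrt ((n t : ℝ) * m t))) ∧
    Tendsto (fun t =>
      alphaErr (N t) (M t)
        (psiMax (N t) (M t) (n t) (m t) (Tnm (N t) (M t) (n t) (m t))))
      atTop (nhds 0) := by
  exact stmt1_general N M n m a hb
    (tendsto_Gnm_atTop (fun t => (hb t).1) (fun t => (hb t).2.1) (fun t => (hb t).2.2.2) hp)
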